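/- For all integers B ≥ 0, m ≥ 0 and every real μ with 0 < μ < 1, the variance of the generalized binomial distribution is Σ_{j=0}^{2B+2m} j²·p_j(2B, μ, m) − (m + 2Bμ)² = 2Bμ(1−μ) + 2μ(1−μ)·m·(2B+m+1). -/

import Mathlib

open Finset

/-- The Jacobi polynomial `P_m^{(α,β)}(x)` for integer parameters `α, β`
(with `m+α ≥ 0` and `m+β ≥ 0` in the intended range), defined by
`P_m^{(α,β)}(x) = ∑_{s=0}^{m} C(m+α, m−s) C(m+β, s) ((x−1)/2)^s ((x+1)/2)^{m−s}`. -/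
noncomputable def jacobiP (m : ℕ) (α β : ℤ) (x : ℝ) : ℝ :=
  ∑ s ∈ Finset.range (m + 1),
    (((m + α).toNat.choose (m - s) : ℝ)) * (((m + β).toNat.choose s : ℝ)) *
      ((x - 1) / 2) ^ s * ((x + 1) / 2) ^ (m - s)

/-- The generalized binomial probability
`p_j(2B, μ, m) = (m!(2B+m)!)/(j!(2B+2m−j)!) μ^{j−m} (1−μ)^{2B+m−j} (P_m^{(j−m,2B+m−j)}(1−2μ))²`,
where the powers of `μ` and `1−μ` are integer (possibly negative) powers. -/
noncomputable def genBinomP (B m : ℕ) (μ : ℝ) (j : ℕ) : ℝ :=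
  ((m.factorial * (2 * B + m).factorial : ℕ) : ℝ)
      / ((j.factorial * (2 * B + 2 * m - j).factorial : ℕ) : ℝ)
    * μ ^ ((j : ℤ) - (m : ℤ)) * (1 - μ) ^ ((2 * B + m : ℤ) - (j : ℤ))
    * (jacobiP m ((j : ℤ) - (m : ℤ)) ((2 * B + m : ℤ) - (j : ℤ)) (1 - 2 * μ)) ^ 2

/-!
Up to the factor `m!`, the Jacobi polynomial in `p_j(2B, μ, m)` is the value at `j` of the `m`-th
monic Krawtchouk polynomial `κ_m`, the orthogonal polynomial of degree `m` for the binomial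
distribution with `N = 2B + 2m` trials, and `p_j` is the binomial weight times `κ_m(j)² / ‖κ_m‖²`.
So multiplication by `j` acts on `κ_m` through the three-term recurrence: its diagonal coefficient
`m + (N - 2m)μ = m + 2Bμ` is the mean of `p`, and by Pythagoras the variance is
`‖(j - mean) κ_m‖² / ‖κ_m‖²`, the sum of the squares of the normalized off-diagonal coefficients.

The recurrence comes from the differential equation in `x` of the generating function
`(1 + (1 - μ)x)^j (1 - μx)^(N - j)`, and orthogonality from the fact that the product of two such
functions, in `x` and in `y`, has binomial expectation `(1 + μ(1 - μ)xy)^N`.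
-/

section Krawtchouk

open Polynomial

theorem coeff_one_add_C_mul_X_pow {R : Type*} [CommSemiring R] (a : R) (n k : ℕ) :
    ((1 + C a * X : R[X]) ^ n).coeff k = n.choose k * a ^ k := by
  have h : (1 + C a * X : R[X]) ^ n = ((1 + X : R[X]) ^ n).comp (C a * X) := by simp
  rw [h, comp_C_mul_X_coeff, coeff_one_add_X_pow]

theorem mul_derivative_pow {R : Type*} [CommSemiring R] (p : R[X]) (n : ℕ) :
    p * derivative (p ^ n) = n * p ^ n * derivative p := by
  cases n with
  | zero => simp
  | succ k =>
    rw [derivative_pow_succ, pow_succ]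
    push_cast
    simp only [C_add, C_1, map_natCast]
    ring

theorem coeff_X_mul_derivative {R : Type*} [CommSemiring R] (p : R[X]) (n : ℕ) :
    (X * derivative p).coeff n = n * p.coeff n := by
  cases n with
  | zero => simp
  | succ k =>
    rw [coeff_X_mul, coeff_derivative, mul_comm]
    push_cast
    rfl

variable {R : Type*} [CommRing R]

/-- The weight of `j` in the binomial distribution with parameters `N` and `μ`. -/
def binomWeight (μ : R) (N j : ℕ) : R :=
  N.choose j * μ ^ j * (1 - μ) ^ (N - j)

/-- The generating polynomial `(1 + (1 - μ)X)^j (1 - μX)^(N - j)`, meant for `j ≤ N`: its `m`-th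
coefficient is, up to normalization, the value at `j` of the `m`-th Krawtchouk polynomial. -/
noncomputable def krawtchoukGen (μ : R) (N j : ℕ) : R[X] :=
  (1 + C (1 - μ) * X) ^ j * (1 + C (-μ) * X) ^ (N - j)

/-- The value at `j` of the `m`-th monic Krawtchouk polynomial: the `m`-th orthogonal polynomial of
the binomial distribution with parameters `N` and `μ`, with leading coefficient `1` in `j`. -/
noncomputable def monicKrawtchouk (μ : R) (N m j : ℕ) : R :=
  m.factorial * (krawtchoukGen μ N j).coeff m

/-- The squared norm of the `m`-th monic Krawtchouk polynomial in `L²` of the binomial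
distribution with parameters `N` and `μ`, given by its closed form. -/
def krawtchoukNormSq (μ : R) (N m : ℕ) : R :=
  m.factorial * N.descFactorial m * (μ * (1 - μ)) ^ m

theorem krawtchoukNormSq_succ (μ : R) (N m : ℕ) :
    krawtchoukNormSq μ N (m + 1) = (m + 1) * (N - m) * (μ * (1 - μ)) * krawtchoukNormSq μ N m := by
  have hdesc : (N.descFactorial (m + 1) : R) = (N - m) * N.descFactorial m := by
    rcases le_or_gt m N with hm | hm
    · rw [Nat.descFactorial_succ, Nat.cast_mul, Nat.cast_sub hm]
    · rw [Nat.descFactorial_of_lt hm, Nat.descFactorial_of_lt (hm.trans m.lt_succ_self)]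
      simp
  rw [krawtchoukNormSq, krawtchoukNormSq, hdesc, Nat.factorial_succ]
  push_cast
  ring

theorem krawtchoukNormSq_ne_zero [NoZeroDivisors R] [CharZero R] {μ : R} (h0 : μ ≠ 0) (h1 : μ ≠ 1)
    {N m : ℕ} (hm : m ≤ N) :
    krawtchoukNormSq μ N m ≠ 0 := by
  have hdesc : N.descFactorial m ≠ 0 := by simpa [Nat.descFactorial_eq_zero_iff_lt] using hm
  have hq : 1 - μ ≠ 0 := sub_ne_zero.mpr h1.symm
  exact mul_ne_zero (mod_cast mul_ne_zero m.factorial_ne_zero hdesc)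
    (pow_ne_zero m (mul_ne_zero h0 hq))

theorem krawtchoukGen_differential_equation (μ : R) {N j : ℕ} (hj : j ≤ N) :
    (1 + C (1 - μ) * X) * (1 + C (-μ) * X) * derivative (krawtchoukGen μ N j)
      = (C (j - N * μ) - C (N * (μ * (1 - μ))) * X) * krawtchoukGen μ N j := by
  obtain ⟨k, rfl⟩ := Nat.exists_eq_add_of_le hj
  have hu := mul_derivative_pow (1 + C (1 - μ) * X) j
  have hv := mul_derivative_pow (1 + C (-μ) * X) k
  have hderiv (a : R) : derivative (1 + C a * X) = C a := by simp
  rw [hderiv] at hu hv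
  rw [krawtchoukGen, Nat.add_sub_cancel_left, derivative_mul]
  simp only [C_mul, C_add, C_sub, C_neg, C_1, map_natCast, Nat.cast_add] at hu hv ⊢
  linear_combination (1 + -C μ * X) * (1 + -C μ * X) ^ k * hu
    + (1 + (1 - C μ) * X) * (1 + (1 - C μ) * X) ^ j * hv

/-- At `m = 0` the truncated index `m - 1` is harmless, as the coefficient of that term vanishes. -/
theorem monicKrawtchouk_recurrence (μ : R) {N j : ℕ} (hj : j ≤ N) (m : ℕ) :
    j * monicKrawtchouk μ N m j
      = monicKrawtchouk μ N (m + 1) j + (m + (N - 2 * m) * μ) * monicKrawtchouk μ N m j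
        + m * (N + 1 - m) * (μ * (1 - μ)) * monicKrawtchouk μ N (m - 1) j := by
  set G := krawtchoukGen μ N j with hG
  have hode : derivative G + C (1 - 2 * μ) * (X * derivative G)
      - C (μ * (1 - μ)) * (X * (X * derivative G))
      = C (j - N * μ) * G - C (N * (μ * (1 - μ))) * (X * G) := by
    have h := krawtchoukGen_differential_equation μ hj
    simp only [← hG, C_mul, C_sub, C_neg, C_1, C_ofNat] at h ⊢
    linear_combination h
  have hcoeff := congrArg (coeff · m) hode
  simp only [monicKrawtchouk, ← hG]
  cases m with
  | zero =>
    simp only [coeff_sub, coeff_add, coeff_C_mul, coeff_X_mul_zero, coeff_derivative] at hcoeff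
    simp only [zero_add, Nat.factorial_zero, Nat.factorial_one, Nat.cast_zero,
      Nat.cast_one] at hcoeff ⊢
    linear_combination -hcoeff
  | succ k =>
    simp only [coeff_sub, coeff_add, coeff_C_mul, coeff_X_mul, coeff_X_mul_derivative,
      coeff_derivative] at hcoeff
    simp only [Nat.add_sub_cancel, Nat.factorial_succ]
    push_cast at hcoeff ⊢
    linear_combination -((k + 1 : R) * k.factorial) * hcoeff

theorem sum_binomWeight_mul_generating (μ s t : R) (N : ℕ) :
    ∑ j ∈ range (N + 1), binomWeight μ N j
        * ((1 + (1 - μ) * s) ^ j * (1 + -μ * s) ^ (N - j))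
        * ((1 + (1 - μ) * t) ^ j * (1 + -μ * t) ^ (N - j))
      = (1 + μ * (1 - μ) * s * t) ^ N := by
  have hsplit : 1 + μ * (1 - μ) * s * t
      = μ * (1 + (1 - μ) * s) * (1 + (1 - μ) * t) + (1 - μ) * (1 + -μ * s) * (1 + -μ * t) := by
    ring
  rw [hsplit, add_pow]
  refine sum_congr rfl fun j _ => ?_
  simp only [binomWeight, mul_pow]
  ring

/-- In `R[X][X]` the two variables of the generating functions are `C X` and `X`. -/
theorem sum_binomWeight_mul_krawtchoukGen (μ : R) (N : ℕ) :
    ∑ j ∈ range (N + 1),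
        C (C (binomWeight μ N j) * krawtchoukGen μ N j) * (krawtchoukGen μ N j).map C
      = (1 + C (C (μ * (1 - μ)) * X) * X : R[X][X]) ^ N := by
  have hweight (j : ℕ) : C (C (binomWeight μ N j)) = binomWeight (C (C μ) : R[X][X]) N j := by
    simp only [binomWeight, C_mul, C_pow, C_sub, C_1, map_natCast]
  simp only [krawtchoukGen, C_mul, hweight, C_pow, C_add, C_sub, C_neg, C_1, Polynomial.map_mul,
    Polynomial.map_pow, Polynomial.map_add, Polynomial.map_sub, Polynomial.map_neg,
    Polynomial.map_one, map_C, map_X]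
  exact sum_binomWeight_mul_generating (C (C μ)) (C X) X N

theorem monicKrawtchouk_orthogonality (μ : R) (N m l : ℕ) :
    ∑ j ∈ range (N + 1), binomWeight μ N j * (monicKrawtchouk μ N m j * monicKrawtchouk μ N l j)
      = if m = l then krawtchoukNormSq μ N m else 0 := by
  have hcoeff := congrArg (fun f => (f.coeff l).coeff m) (sum_binomWeight_mul_krawtchoukGen μ N)
  simp only [finsetSum_coeff, coeff_C_mul, coeff_map, coeff_mul_C, coeff_one_add_C_mul_X_pow,
    mul_pow, ← C_pow, coeff_natCast_mul, coeff_X_pow] at hcoeff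
  calc
    _ = m.factorial * l.factorial * ∑ j ∈ range (N + 1), binomWeight μ N j
          * (krawtchoukGen μ N j).coeff m * (krawtchoukGen μ N j).coeff l := by
      rw [mul_sum]
      refine sum_congr rfl fun j _ => ?_
      simp only [monicKrawtchouk]
      ring
    _ = if m = l then krawtchoukNormSq μ N m else 0 := by
      rw [hcoeff]
      split_ifs with h
      · subst h
        rw [krawtchoukNormSq, Nat.descFactorial_eq_factorial_mul_choose, mul_pow]
        push_cast
        ring
      · simp

theorem sum_mul_monicKrawtchouk_sq (μ : R) (N m : ℕ) :
    ∑ j ∈ range (N + 1), (j : R) * (binomWeight μ N j * monicKrawtchouk μ N m j ^ 2)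
      = (m + (N - 2 * m) * μ) * krawtchoukNormSq μ N m := by
  have horth := monicKrawtchouk_orthogonality μ N m
  set c : R := m + (N - 2 * m) * μ
  set b : R := m * (N + 1 - m) * (μ * (1 - μ)) with hb
  have hlower : b * (if m = m - 1 then krawtchoukNormSq μ N m else 0) = 0 := by
    cases m <;> simp [hb]
  calc
    _ = ∑ j ∈ range (N + 1),
          (binomWeight μ N j * (monicKrawtchouk μ N m j * monicKrawtchouk μ N (m + 1) j)
          + c * (binomWeight μ N j * (monicKrawtchouk μ N m j * monicKrawtchouk μ N m j))
          + b
            * (binomWeight μ N j * (monicKrawtchouk μ N m j * monicKrawtchouk μ N (m - 1) j))) := by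
      refine sum_congr rfl fun j hj => ?_
      have hrec := monicKrawtchouk_recurrence μ (mem_range_succ_iff.mp hj) m
      linear_combination binomWeight μ N j * monicKrawtchouk μ N m j * hrec
    _ = c * krawtchoukNormSq μ N m := by
      simp only [sum_add_distrib, ← mul_sum, horth, hlower]
      simp

theorem sum_sub_sq_mul_monicKrawtchouk_sq (μ : R) (N m : ℕ) :
    ∑ j ∈ range (N + 1), ((j : R) - (m + (N - 2 * m) * μ)) ^ 2
        * (binomWeight μ N j * monicKrawtchouk μ N m j ^ 2)
      = μ * (1 - μ) * ((m + 1) * (N - m) + m * (N + 1 - m)) * krawtchoukNormSq μ N m := by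
  have horth := monicKrawtchouk_orthogonality μ N
  set b : R := m * (N + 1 - m) * (μ * (1 - μ)) with hb
  have hlower : b * krawtchoukNormSq μ N (m - 1) * b = b * krawtchoukNormSq μ N m := by
    cases m with
    | zero => simp [hb]
    | succ k =>
      rw [krawtchoukNormSq_succ, hb, Nat.add_sub_cancel]
      push_cast
      ring
  calc
    _ = ∑ j ∈ range (N + 1),
          (binomWeight μ N j * (monicKrawtchouk μ N (m + 1) j * monicKrawtchouk μ N (m + 1) j)
          + 2 * b
            * (binomWeight μ N j * (monicKrawtchouk μ N (m + 1) j * monicKrawtchouk μ N (m - 1) j))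
          + b ^ 2
            * (binomWeight μ N j
              * (monicKrawtchouk μ N (m - 1) j * monicKrawtchouk μ N (m - 1) j))) := by
      refine sum_congr rfl fun j hj => ?_
      have hrec : ((j : R) - (m + (N - 2 * m) * μ)) * monicKrawtchouk μ N m j
          = monicKrawtchouk μ N (m + 1) j + b * monicKrawtchouk μ N (m - 1) j := by
        linear_combination monicKrawtchouk_recurrence μ (mem_range_succ_iff.mp hj) m
      rw [mul_left_comm, ← mul_pow, hrec]
      ring
    _ = krawtchoukNormSq μ N (m + 1) + b ^ 2 * krawtchoukNormSq μ N (m - 1) := by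
      simp only [sum_add_distrib, ← mul_sum, horth, if_true, show m + 1 ≠ m - 1 by lia, if_false,
        mul_zero, add_zero]
    _ = _ := by
      rw [krawtchoukNormSq_succ]
      linear_combination hlower

end Krawtchouk

theorem factorial_mul_jacobiP (μ : ℝ) (N m j : ℕ) :
    m.factorial * jacobiP m ((j : ℤ) - m) ((N : ℤ) - m - j) (1 - 2 * μ)
      = monicKrawtchouk μ N m j := by
  have hα : ((m : ℤ) + ((j : ℤ) - m)).toNat = j := by lia
  have hβ : ((m : ℤ) + ((N : ℤ) - m - j)).toNat = N - j := by lia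
  rw [monicKrawtchouk, krawtchoukGen, mul_comm (_ ^ j), Polynomial.coeff_mul,
    Nat.sum_antidiagonal_eq_sum_range_succ_mk, jacobiP, hα, hβ]
  congr 1
  refine sum_congr rfl fun s _ => ?_
  rw [coeff_one_add_C_mul_X_pow, coeff_one_add_C_mul_X_pow,
    show (1 - 2 * μ - 1) / 2 = -μ by ring, show (1 - 2 * μ + 1) / 2 = 1 - μ by ring]
  ring

theorem genBinomP_mul_krawtchoukNormSq (B m : ℕ) {μ : ℝ} (h0 : μ ≠ 0) (h1 : μ ≠ 1) {j : ℕ}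
    (hj : j ≤ 2 * B + 2 * m) :
    genBinomP B m μ j * krawtchoukNormSq μ (2 * B + 2 * m) m
      = binomWeight μ (2 * B + 2 * m) j * monicKrawtchouk μ (2 * B + 2 * m) m j ^ 2 := by
  have hq : 1 - μ ≠ 0 := sub_ne_zero.mpr h1.symm
  have hβ : (2 * B + m : ℤ) - j = ((2 * B + 2 * m : ℕ) : ℤ) - m - j := by push_cast; ring
  have hμpow : μ ^ ((j : ℤ) - m) * μ ^ m = μ ^ j := by
    rw [← zpow_natCast, ← zpow_natCast, ← zpow_add₀ h0, sub_add_cancel]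
  have hqpow : (1 - μ) ^ (((2 * B + 2 * m : ℕ) : ℤ) - m - j) * (1 - μ) ^ m
      = (1 - μ) ^ (2 * B + 2 * m - j) := by
    rw [← zpow_natCast, ← zpow_natCast, ← zpow_add₀ hq]
    congr 1
    lia
  have hdesc : ((2 * B + m).factorial * (2 * B + 2 * m).descFactorial m : ℝ)
      = (2 * B + 2 * m).factorial := by
    rw [← Nat.factorial_mul_descFactorial (show m ≤ 2 * B + 2 * m by lia),
      show 2 * B + 2 * m - m = 2 * B + m by lia, Nat.cast_mul]
  rw [genBinomP, hβ, ← factorial_mul_jacobiP, binomWeight, krawtchoukNormSq, ← hμpow, ← hqpow,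
    Nat.cast_choose ℝ hj, ← hdesc, mul_pow μ]
  push_cast
  ring

theorem sum_mul_genBinomP (B m : ℕ) {μ : ℝ} (h0 : μ ≠ 0) (h1 : μ ≠ 1) (f : ℕ → ℝ) :
    ∑ j ∈ range (2 * B + 2 * m + 1), f j * genBinomP B m μ j
      = (∑ j ∈ range (2 * B + 2 * m + 1), f j
          * (binomWeight μ (2 * B + 2 * m) j * monicKrawtchouk μ (2 * B + 2 * m) m j ^ 2))
        / krawtchoukNormSq μ (2 * B + 2 * m) m := by
  rw [eq_div_iff (krawtchoukNormSq_ne_zero h0 h1 (by lia)), sum_mul]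
  refine sum_congr rfl fun j hj => ?_
  rw [mul_assoc, genBinomP_mul_krawtchoukNormSq B m h0 h1 (mem_range_succ_iff.mp hj)]

theorem sum_genBinomP (B m : ℕ) {μ : ℝ} (h0 : μ ≠ 0) (h1 : μ ≠ 1) :
    ∑ j ∈ range (2 * B + 2 * m + 1), genBinomP B m μ j = 1 := by
  have horth := monicKrawtchouk_orthogonality μ (2 * B + 2 * m) m m
  have hsum := sum_mul_genBinomP B m h0 h1 1
  simp only [Pi.one_apply, one_mul, sq, horth, if_true] at hsum
  rw [hsum, div_self (krawtchoukNormSq_ne_zero h0 h1 (by lia))]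

theorem genBinomP_mean (B m : ℕ) {μ : ℝ} (h0 : μ ≠ 0) (h1 : μ ≠ 1) :
    ∑ j ∈ range (2 * B + 2 * m + 1), (j : ℝ) * genBinomP B m μ j = m + 2 * B * μ := by
  rw [sum_mul_genBinomP B m h0 h1 (fun j => j), sum_mul_monicKrawtchouk_sq,
    mul_div_cancel_right₀ _ (krawtchoukNormSq_ne_zero h0 h1 (by lia))]
  push_cast
  ring

theorem genBinomP_centralMoment_two (B m : ℕ) {μ : ℝ} (h0 : μ ≠ 0) (h1 : μ ≠ 1) :
    ∑ j ∈ range (2 * B + 2 * m + 1), ((j : ℝ) - (m + 2 * B * μ)) ^ 2 * genBinomP B m μ j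
      = 2 * B * μ * (1 - μ) + 2 * μ * (1 - μ) * m * (2 * B + m + 1) := by
  have hmean : (m : ℝ) + 2 * B * μ = m + ((2 * B + 2 * m : ℕ) - 2 * m) * μ := by
    push_cast
    ring
  rw [hmean, sum_mul_genBinomP B m h0 h1 (fun j => ((j : ℝ) - _) ^ 2),
    sum_sub_sq_mul_monicKrawtchouk_sq,
    mul_div_cancel_right₀ _ (krawtchoukNormSq_ne_zero h0 h1 (by lia))]
  push_cast
  ring

theorem genBinomP_variance_general (B m : ℕ) {μ : ℝ} (h0 : μ ≠ 0) (h1 : μ ≠ 1) :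
    (∑ j ∈ range (2 * B + 2 * m + 1), (j : ℝ) ^ 2 * genBinomP B m μ j) - (m + 2 * B * μ) ^ 2
      = 2 * B * μ * (1 - μ) + 2 * μ * (1 - μ) * m * (2 * B + m + 1) := by
  have hexpand (c : ℝ) : ∑ j ∈ range (2 * B + 2 * m + 1), ((j : ℝ) - c) ^ 2 * genBinomP B m μ j
      = (∑ j ∈ range (2 * B + 2 * m + 1), (j : ℝ) ^ 2 * genBinomP B m μ j)
        - 2 * c * (∑ j ∈ range (2 * B + 2 * m + 1), (j : ℝ) * genBinomP B m μ j)
        + c ^ 2 * ∑ j ∈ range (2 * B + 2 * m + 1), genBinomP B m μ j := by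
    simp only [mul_sum, ← sum_sub_distrib, ← sum_add_distrib]
    exact sum_congr rfl fun j _ => by ring
  rw [← genBinomP_centralMoment_two B m h0 h1, hexpand, genBinomP_mean B m h0 h1,
    sum_genBinomP B m h0 h1]
  ring

/-- The variance of the generalized binomial distribution:
`Var(X) = 2Bμ(1−μ) + 2μ(1−μ)m(2B+m+1)`. -/
theorem genBinomP_variance (B m : ℕ) (μ : ℝ) (h0 : 0 < μ) (h1 : μ < 1) :
    (∑ j ∈ Finset.range (2 * B + 2 * m + 1), (j : ℝ) ^ 2 * genBinomP B m μ j)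
        - ((m : ℝ) + 2 * B * μ) ^ 2
      = 2 * B * μ * (1 - μ) + 2 * μ * (1 - μ) * m * (2 * B + m + 1) :=
  genBinomP_variance_general B m h0.ne' h1.ne
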